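/- (Eigenvalue lower bound on complement of Ritz space, Lemma 3.2) Let A ∈ ℂ^(N×N) be Hermitian with eigenvalues λ^(1) ≤ ... ≤ λ^(N) and let V ∈ ℂ^(N×ℓ) collect orthonormal eigenvectors for λ^(1),...,λ^(ℓ), with Λ = diag(λ^(1),...,λ^(ℓ)). Let U ∈ ℂ^(N×r) have orthonormal columns with N − r ≥ r, and let U⊥ span the orthogonal complement of range(U). Then λ_min(U⊥* A U⊥) ≥ λ^(1) + β, where β is the smallest eigenvalue of the ℓ×ℓ matrix (Λ − λ^(1) I_ℓ) − V*UU*V (Λ − λ^(ℓ+1) I_ℓ). -/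

import Mathlib

open Matrix

/-- Smallest eigenvalue of a (Hermitian) matrix. -/
noncomputable def lamMin {n : ℕ} {𝕜 : Type*} [RCLike 𝕜] (A : Matrix (Fin n) (Fin n) 𝕜) : ℝ :=
  if h : A.IsHermitian then ⨅ i, h.eigenvalues i else 0

/-- Largest eigenvalue of a (Hermitian) matrix. -/
noncomputable def lamMax {n : ℕ} {𝕜 : Type*} [RCLike 𝕜] (A : Matrix (Fin n) (Fin n) 𝕜) : ℝ :=
  if h : A.IsHermitian then ⨆ i, h.eigenvalues i else 0

/-- Rayleigh quotient u*Au/(u*u). -/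
noncomputable def RQ {n : ℕ} (A : Matrix (Fin n) (Fin n) ℂ) (u : Fin n → ℂ) : ℝ :=
  (star u ⬝ᵥ A *ᵥ u).re / (star u ⬝ᵥ u).re


open scoped ComplexOrder

lemma aux_eig_mem {n : ℕ} {M : Matrix (Fin n) (Fin n) ℂ} (h : M.IsHermitian) (i : Fin n) :
    ∃ y : Fin n → ℂ, y ≠ 0 ∧ M *ᵥ y = (h.eigenvalues i : ℂ) • y := by
  refine ⟨(h.eigenvectorBasis i).ofLp, ?_, ?_⟩
  · intro h0
    have := h.eigenvectorBasis.orthonormal.ne_zero i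
    apply this
    ext k
    exact congrFun h0 k
  · have := h.mulVec_eigenvectorBasis i
    rw [this]
    ext k
    simp

lemma aux_pos {n : ℕ} {y : Fin n → ℂ} (hy : y ≠ 0) : 0 < (star y ⬝ᵥ y).re := by
  have := dotProduct_star_self_pos_iff.2 hy
  exact (Complex.pos_iff.1 this).1

lemma aux_lower {n : ℕ} {M : Matrix (Fin n) (Fin n) ℂ} (h : M.IsHermitian) (c : ℝ)
    (hp : (M - (c : ℂ) • 1).PosSemidef) (i : Fin n) : c ≤ h.eigenvalues i := by
  obtain ⟨y, hy, he⟩ := aux_eig_mem h i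
  have h1 := hp.dotProduct_mulVec_nonneg y
  have h2 : (M - (c : ℂ) • 1) *ᵥ y = ((h.eigenvalues i - c : ℝ) : ℂ) • y := by
    rw [sub_mulVec, he, smul_mulVec, one_mulVec, ← sub_smul]; push_cast; rfl
  rw [h2, dotProduct_smul, smul_eq_mul] at h1
  have h3 := (Complex.nonneg_iff.1 h1).1
  rw [Complex.re_ofReal_mul] at h3
  have := aux_pos hy
  by_contra hc
  push Not at hc
  nlinarith

lemma aux_upper {n : ℕ} {S : Matrix (Fin n) (Fin n) ℂ} (hS : S.IsHermitian) (μ : ℝ)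
    (H : ∀ (e : ℝ) (y : Fin n → ℂ), y ≠ 0 → S *ᵥ y = (e : ℂ) • y → e ≤ μ) :
    ((μ : ℂ) • 1 - S).PosSemidef := by
  have hh : ((μ : ℂ) • (1 : Matrix (Fin n) (Fin n) ℂ) - S).IsHermitian := by
    rw [Matrix.IsHermitian, conjTranspose_sub, conjTranspose_smul, hS.eq]
    simp
  rw [hh.posSemidef_iff_eigenvalues_nonneg]
  intro i
  obtain ⟨y, hy, he⟩ := aux_eig_mem hh i
  have h2 : S *ᵥ y = ((μ - hh.eigenvalues i : ℝ) : ℂ) • y := by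
    rw [sub_mulVec, smul_mulVec, one_mulVec] at he
    push_cast
    rw [sub_smul, ← he]; abel
  have := H _ y hy h2
  simp only [Pi.zero_apply]
  linarith

lemma aux_VDV {N ℓ : ℕ} (hℓN : ℓ < N) (lam : Fin N → ℝ) (hmono : Monotone lam)
    (W : Matrix (Fin N) (Fin N) ℂ) (hW : W * Wᴴ = 1) (σ : ℝ) (hσ : σ = lam ⟨ℓ, hℓN⟩) 
    (V : Matrix (Fin N) (Fin ℓ) ℂ)
    (hV : V = W.submatrix id (fun j : Fin ℓ => Fin.castLE hℓN.le j)) :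
    (W * Matrix.diagonal (fun i => (lam i : ℂ)) * Wᴴ - (σ : ℂ) • 1 +
      V * Matrix.diagonal (fun j : Fin ℓ => ((σ - lam (Fin.castLE hℓN.le j) : ℝ) : ℂ)) * Vᴴ).PosSemidef := by
  have h1 : V = W * (1 : Matrix (Fin N) (Fin N) ℂ).submatrix id
      (fun j : Fin ℓ => Fin.castLE hℓN.le j) := by
    rw [hV]; ext i j; simp [Matrix.mul_apply, Matrix.one_apply]
  set E := (1 : Matrix (Fin N) (Fin N) ℂ).submatrix id
      (fun j : Fin ℓ => Fin.castLE hℓN.le j) with hE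
  have h2 : E * Matrix.diagonal (fun j : Fin ℓ => ((σ - lam (Fin.castLE hℓN.le j) : ℝ) : ℂ)) * Eᴴ
      = Matrix.diagonal (fun i : Fin N => ((if i.1 < ℓ then σ - lam i else 0 : ℝ) : ℂ)) := by
    ext i j
    rw [Matrix.mul_apply]
    simp only [mul_diagonal, hE, submatrix_apply, id, conjTranspose_apply, one_apply,
      diagonal_apply]
    by_cases hi : i.1 < ℓ
    · have hi' : ∀ k : Fin ℓ, i = Fin.castLE hℓN.le k ↔ k = ⟨i.1, hi⟩ := by
        intro k; simp only [Fin.ext_iff, Fin.val_castLE]; exact eq_comm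
      simp only [hi', ite_mul, one_mul, zero_mul, Finset.sum_ite_eq', Finset.mem_univ, if_true, hi]
      have : Fin.castLE hℓN.le ⟨i.1, hi⟩ = i := rfl
      simp only [this]
      by_cases hij : i = j
      · simp [hij]
      · simp [hij, Ne.symm hij]
    · have hi' : ∀ k : Fin ℓ, ¬ i = Fin.castLE hℓN.le k := by
        intro k hk; apply hi; rw [hk]; exact k.2
      simp [hi', hi]
  have h3 : W * Matrix.diagonal (fun i => (lam i : ℂ)) * Wᴴ - (σ : ℂ) • 1 +
      V * Matrix.diagonal (fun j : Fin ℓ => ((σ - lam (Fin.castLE hℓN.le j) : ℝ) : ℂ)) * Vᴴ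
      = W * Matrix.diagonal (fun i : Fin N => ((if i.1 < ℓ then 0 else lam i - σ : ℝ) : ℂ)) * Wᴴ := by
    have h4 : V * Matrix.diagonal (fun j : Fin ℓ => ((σ - lam (Fin.castLE hℓN.le j) : ℝ) : ℂ)) * Vᴴ
        = W * (E * Matrix.diagonal (fun j : Fin ℓ => ((σ - lam (Fin.castLE hℓN.le j) : ℝ) : ℂ)) * Eᴴ)
          * Wᴴ := by
      rw [h1, conjTranspose_mul]; simp only [Matrix.mul_assoc]
    have h5 : (σ : ℂ) • (1 : Matrix (Fin N) (Fin N) ℂ)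
        = W * Matrix.diagonal (fun _ => (σ : ℂ)) * Wᴴ := by
      rw [← smul_one_eq_diagonal, Matrix.mul_smul, Matrix.smul_mul, Matrix.mul_one, hW]
    rw [h4, h2, h5, ← Matrix.sub_mul, ← Matrix.mul_sub, ← Matrix.add_mul, ← Matrix.mul_add,
      diagonal_sub, diagonal_add]
    congr 3
    ext i
    split_ifs <;> push_cast <;> ring
  rw [h3]
  apply PosSemidef.mul_mul_conjTranspose_same
  apply PosSemidef.diagonal
  intro i
  simp only [Pi.zero_apply]
  rw [Complex.zero_le_real]
  split_ifs with h
  · exact le_rfl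
  · rw [hσ, sub_nonneg]; apply hmono; rw [Fin.le_def]; simpa using h

/-- Lemma 3.2: let `A = W diag(lam) W*` be Hermitian with unitary `W` and
sorted eigenvalues `lam`, let `V` consist of the first `ℓ` columns of `W` (eigenvectors of
the `ℓ` smallest eigenvalues), and let `U⊥` span the orthogonal complement of the
range of an orthonormal `U` with `N − r ≥ r`. Then
`λ_min(U⊥* A U⊥) ≥ λ^(1) + β`, where `β` is the smallest eigenvalue of the `ℓ×ℓ` matrix
`(Λ − λ^(1) I) − V*UU*V (Λ − λ^(ℓ+1) I)`. -/
theorem eigenvalue_lower_bound_on_complement_of_ritz_space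
    {N r ℓ : ℕ} (hℓN : ℓ < N) (hrr : r ≤ N - r)
    (A : Matrix (Fin N) (Fin N) ℂ) (hA : A.IsHermitian)
    (lam : Fin N → ℝ) (hmono : Monotone lam)
    (W : Matrix (Fin N) (Fin N) ℂ) (hW : Wᴴ * W = 1)
    (hdecomp : A = W * Matrix.diagonal (fun i => (lam i : ℂ)) * Wᴴ)
    (V : Matrix (Fin N) (Fin ℓ) ℂ)
    (hV : V = W.submatrix id (fun j : Fin ℓ => Fin.castLE hℓN.le j))
    (U : Matrix (Fin N) (Fin r) ℂ) (Up : Matrix (Fin N) (Fin (N - r)) ℂ)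
    (hU : Uᴴ * U = 1) (hUp : Upᴴ * Up = 1) (horth : Uᴴ * Up = 0)
    (hcomplete : U * Uᴴ + Up * Upᴴ = 1)
    (B : Matrix (Fin ℓ) (Fin ℓ) ℂ)
    (hB : B = (Matrix.diagonal (fun j : Fin ℓ => (lam (Fin.castLE hℓN.le j) : ℂ))
          - (lam ⟨0, by omega⟩ : ℂ) • 1)
        - (Vᴴ * U * Uᴴ * V) *
          (Matrix.diagonal (fun j : Fin ℓ => (lam (Fin.castLE hℓN.le j) : ℂ))
            - (lam ⟨ℓ, hℓN⟩ : ℂ) • 1))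
    (β : ℝ)
    (hβ : IsLeast {x : ℝ | Module.End.HasEigenvalue B.mulVecLin (x : ℂ)} β) :
    lamMin (Upᴴ * A * Up) ≥ lam ⟨0, by omega⟩ + β := by
  have hW' : W * Wᴴ = 1 := mul_eq_one_comm.1 hW
  set l1 : ℝ := lam ⟨0, by omega⟩ with hl1
  set σ : ℝ := lam ⟨ℓ, hℓN⟩ with hσ
  set D : Matrix (Fin ℓ) (Fin ℓ) ℂ :=
    Matrix.diagonal (fun j : Fin ℓ => ((σ - lam (Fin.castLE hℓN.le j) : ℝ) : ℂ)) with hD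
  have hDpsd : D.PosSemidef := by
    apply PosSemidef.diagonal
    intro i
    simp only [Pi.zero_apply]
    rw [Complex.zero_le_real, sub_nonneg]
    apply hmono
    rw [Fin.le_def]; simpa using i.2.le
  set G : Matrix (Fin ℓ) (Fin (N - r)) ℂ := Vᴴ * Up with hG
  have hVV : Vᴴ * V = 1 := by
    rw [hV]
    ext i j
    have := congrFun (congrFun hW (Fin.castLE hℓN.le i)) (Fin.castLE hℓN.le j)
    rw [Matrix.mul_apply] at this ⊢
    simpa [one_apply, Fin.ext_iff] using this
  have hK : Vᴴ * U * Uᴴ * V = 1 - G * Gᴴ := by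
    have h1 : U * Uᴴ = 1 - Up * Upᴴ := eq_sub_of_add_eq hcomplete
    have h2 : Vᴴ * U * Uᴴ * V = Vᴴ * (U * Uᴴ) * V := by simp only [Matrix.mul_assoc]
    rw [h2, h1, Matrix.mul_sub, Matrix.sub_mul, Matrix.mul_one, hVV, hG, conjTranspose_mul,
      conjTranspose_conjTranspose]
    simp only [Matrix.mul_assoc]
  have hBe : B = ((σ - l1 : ℝ) : ℂ) • 1 - G * Gᴴ * D := by
    have hd1 : Matrix.diagonal (fun j : Fin ℓ => (lam (Fin.castLE hℓN.le j) : ℂ))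
        = (σ : ℂ) • 1 - D := by
      rw [smul_one_eq_diagonal, hD, diagonal_sub]
      congr 1; ext j; push_cast; ring
    rw [hB, hK, hd1, sub_sub_cancel_left, Matrix.sub_mul, Matrix.one_mul,
      Matrix.mul_neg]
    push_cast
    rw [sub_smul]
    abel
  have hBv : ∀ v : Fin ℓ → ℂ, B *ᵥ v = ((σ - l1 : ℝ) : ℂ) • v - (G * Gᴴ * D) *ᵥ v := by
    intro v; rw [hBe, sub_mulVec, smul_mulVec, one_mulVec]
  -- the number `μ` is nonnegative
  have hμ : 0 ≤ σ - l1 - β := by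
    obtain ⟨v, hv⟩ := hβ.1.exists_hasEigenvector
    have hv0 := hv.2
    have hve := hv.apply_eq_smul
    rw [mulVecLin_apply, hBv] at hve
    have hkd : (G * Gᴴ * D) *ᵥ v = ((σ - l1 - β : ℝ) : ℂ) • v := by
      rw [Complex.ofReal_sub, sub_smul, ← hve]; abel
    have hn : 0 ≤ star (D *ᵥ v) ⬝ᵥ ((G * Gᴴ) *ᵥ (D *ᵥ v)) :=
      (posSemidef_self_mul_conjTranspose G).dotProduct_mulVec_nonneg _
    have hs : star (D *ᵥ v) ⬝ᵥ v = star v ⬝ᵥ (D *ᵥ v) := by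
      rw [star_mulVec, hDpsd.isHermitian.eq, dotProduct_mulVec]
    rw [mulVec_mulVec, hkd, dotProduct_smul, hs, smul_eq_mul] at hn
    have hn2 := (Complex.nonneg_iff.1 hn).1
    rw [Complex.re_ofReal_mul] at hn2
    have hd := hDpsd.dotProduct_mulVec_nonneg v
    have hd2 := (Complex.nonneg_iff.1 hd).1
    rcases hd2.lt_or_eq with hlt | heq
    · by_contra hc
      push Not at hc
      nlinarith
    · have hz : star v ⬝ᵥ (D *ᵥ v) = 0 :=
        Complex.ext heq.symm (Complex.nonneg_iff.1 hd).2.symm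
      have hDv := (hDpsd.dotProduct_mulVec_zero_iff v).1 hz
      rw [← mulVec_mulVec, hDv, mulVec_zero] at hkd
      rcases smul_eq_zero.1 hkd.symm with h | h
      · exact (Complex.ofReal_eq_zero.1 h).ge
      · exact absurd h hv0
  have hSpsd : (Gᴴ * D * G).PosSemidef := hDpsd.conjTranspose_mul_mul_same G
  have hC : (((σ - l1 - β : ℝ) : ℂ) • 1 - Gᴴ * D * G).PosSemidef := by
    apply aux_upper hSpsd.isHermitian
    intro e y hy he
    by_contra hc
    push Not at hc
    have hepos : 0 < e := lt_of_le_of_lt hμ hc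
    have hGy : G *ᵥ y ≠ 0 := by
      intro h0
      rw [← mulVec_mulVec, h0, mulVec_zero] at he
      rcases smul_eq_zero.1 he.symm with h | h
      · exact hepos.ne' (Complex.ofReal_eq_zero.1 h)
      · exact hy h
    have hkd : (G * Gᴴ * D) *ᵥ (G *ᵥ y) = (e : ℂ) • (G *ᵥ y) := by
      rw [← mulVec_smul, ← he, mulVec_mulVec, mulVec_mulVec]
      simp only [Matrix.mul_assoc]
    have hmem : (σ - l1 - e) ∈ {x : ℝ | Module.End.HasEigenvalue B.mulVecLin (x : ℂ)} := by
      refine Module.End.hasEigenvalue_of_hasEigenvector (x := G *ᵥ y) ⟨?_, hGy⟩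
      rw [Module.End.mem_eigenspace_iff, mulVecLin_apply, hBv, hkd, ← sub_smul]
      push_cast; rfl
    have := hβ.2 hmem
    linarith
  have hA1 := aux_VDV hℓN lam hmono W hW' σ rfl V hV
  rw [← hdecomp, ← hD] at hA1
  have hA2 := hA1.conjTranspose_mul_mul_same Up
  have hsum := hA2.add hC
  have hM : (Upᴴ * A * Up).IsHermitian := isHermitian_conjTranspose_mul_mul Up hA
  have hfin : (Upᴴ * A * Up - ((l1 + β : ℝ) : ℂ) • 1).PosSemidef := by
    convert hsum using 1
    rw [Matrix.mul_add, Matrix.add_mul, Matrix.mul_sub, Matrix.sub_mul, Matrix.mul_smul,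
      Matrix.smul_mul, Matrix.mul_one, hUp]
    have h7 : Upᴴ * (V * D * Vᴴ) * Up = Gᴴ * D * G := by
      rw [hG, conjTranspose_mul, conjTranspose_conjTranspose]; simp only [Matrix.mul_assoc]
    rw [h7]
    push_cast
    module
  have : Nonempty (Fin (N - r)) := ⟨⟨0, by omega⟩⟩
  rw [lamMin, dif_pos hM]
  exact le_ciInf (aux_lower hM _ hfin)
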